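/- Let N be a non-standard model of PA, a ∈ N − ω, p a condition with n = n_p and N ⊨ |p(N)| > r·(2^a)^{2^n} for a positive rational r, F : N^k → N definable in N, and (σ, σ₁, …, σ_k) a tuple from 2^n with σ ∉ {σ₁, …, σ_k}. Then for each m ∈ ω, in N the cardinality of the set {(b_τ : τ ∈ 2^n) ∈ p(N) : for all i < m, (b_σ)_i = (F(b_{σ₁}, …, b_{σ_k}))_i} is at most 2^{−m}·(2^a)^{2^n}; consequently there exist i ∈ ω and a positive rational ε such that N ⊨ |{(b_τ : τ ∈ 2^n) ∈ p(N) : (b_σ)_i ≠ (F(b_{σ₁}, …, b_{σ_k}))_i}| > ε·(2^a)^{2^n}. -/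

import Mathlib

open FirstOrder FirstOrder.Language

/-- Function symbols of the language of arithmetic: `0`, `1`, `+`, `·`. -/
inductive arithFunc : ℕ → Type
  | zero : arithFunc 0
  | one : arithFunc 0
  | add : arithFunc 2
  | mul : arithFunc 2
  deriving DecidableEq

/-- Relation symbols of the language of arithmetic: `<`. -/
inductive arithRel : ℕ → Type
  | lt : arithRel 2
  deriving DecidableEq

/-- The first-order language of arithmetic `{0, 1, +, ·, <}`. -/
def arith : FirstOrder.Language := ⟨arithFunc, arithRel⟩

namespace Arith

variable {M : Type*} [arith.Structure M]

/-- The interpretation of `0`. -/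
def zeroM (M : Type*) [arith.Structure M] : M :=
  Structure.funMap (L := arith) arithFunc.zero ![]

/-- The interpretation of `1`. -/
def oneM (M : Type*) [arith.Structure M] : M :=
  Structure.funMap (L := arith) arithFunc.one ![]

/-- The interpretation of `+`. -/
def addM (x y : M) : M := Structure.funMap (L := arith) arithFunc.add ![x, y]

/-- The interpretation of `·`. -/
def mulM (x y : M) : M := Structure.funMap (L := arith) arithFunc.mul ![x, y]

/-- The interpretation of `<`. -/
def ltM (x y : M) : Prop := Structure.RelMap (L := arith) arithRel.lt ![x, y]

/-- Non-strict order. -/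
def leM (x y : M) : Prop := ltM x y ∨ x = y

/-- The numeral `n` in `M`: `0`, or `1 + 1 + ⋯ + 1`. -/
def numeral (M : Type*) [arith.Structure M] : ℕ → M
  | 0 => zeroM M
  | n + 1 => addM (numeral M n) (oneM M)

/-- The standard `arith`-structure on `ℕ`. -/
instance : arith.Structure ℕ where
  funMap {n} f v :=
    match f with
    | .zero => 0
    | .one => 1
    | .add => v 0 + v 1
    | .mul => v 0 * v 1
  RelMap {n} r v :=
    match r with
    | .lt => v 0 < v 1

/-- `M` is a model of Peano arithmetic: it satisfies the finitely many basic axioms of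
`PA` together with induction for all parametrically definable sets (which is equivalent
to the usual first-order induction scheme). -/
def IsPAModel (M : Type*) [arith.Structure M] : Prop :=
  (∀ x : M, addM x (zeroM M) = x) ∧
  (∀ x y : M, addM x (addM y (oneM M)) = addM (addM x y) (oneM M)) ∧
  (∀ x : M, mulM x (zeroM M) = zeroM M) ∧
  (∀ x y : M, mulM x (addM y (oneM M)) = addM (mulM x y) x) ∧
  (∀ x : M, ¬ ltM x (zeroM M)) ∧
  (∀ x y : M, ltM x (addM y (oneM M)) ↔ (ltM x y ∨ x = y)) ∧
  (∀ x : M, addM x (oneM M) ≠ zeroM M) ∧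
  (∀ x y : M, addM x (oneM M) = addM y (oneM M) → x = y) ∧
  (∀ s : Set M, Set.Definable₁ (Set.univ : Set M) arith s →
    zeroM M ∈ s → (∀ x ∈ s, addM x (oneM M) ∈ s) → ∀ x : M, x ∈ s)

/-- An element of `M` is standard if it is a numeral. -/
def IsStd (x : M) : Prop := ∃ n : ℕ, x = numeral M n

/-- `M` is a non-standard model of `PA`: a model of `PA` not isomorphic to the standard
model `ℕ`. -/
def NonstandardModel (M : Type*) [arith.Structure M] : Prop :=
  IsPAModel M ∧ ¬ Nonempty (M ≃[arith] ℕ)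

/-- `(x)_i = 1`: the `i`-th binary digit of `x` is `1`, for standard `i`.  This is expressed
by saying that `x = u·2^(i+1) + (2^i + v)` with `v < 2^i`, where `2^i`, `2^(i+1)` are
numerals. -/
def digitB (x : M) (i : ℕ) : Prop :=
  ∃ u v : M, x = addM (mulM u (numeral M (2 ^ (i + 1)))) (addM (numeral M (2 ^ i)) v) ∧
    ltM v (numeral M (2 ^ i))

/-- The standard system of `M`: the collection of subsets of `ℕ` coded by some
non-standard element of `M` (via its standard binary digits). -/
def SSy (M : Type*) [arith.Structure M] : Set (Set ℕ) :=
  {X | ∃ a : M, ¬ IsStd a ∧ ∀ i : ℕ, i ∈ X ↔ digitB a i}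

/-- A function `M → M` is definable (with parameters) if its graph is a definable set. -/
def DefinableFun₁ (f : M → M) : Prop :=
  Set.Definable (Set.univ : Set M) arith {v : Fin 2 → M | f (v 0) = v 1}

/-- A `k`-ary function `M^k → M` is definable (with parameters) if its graph is a
definable set. -/
def DefinableFun {k : ℕ} (F : (Fin k → M) → M) : Prop :=
  Set.Definable (Set.univ : Set M) arith
    {v : Fin (k + 1) → M | F (fun i => v i.castSucc) = v (Fin.last k)}

/-- `c` is the internal cardinality of the set `D ⊆ M`: there is an `M`-definable
bijection between `{x : x < c}` and `D`. -/
def InternalCard (D : Set M) (c : M) : Prop :=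
  ∃ f : M → M, DefinableFun₁ f ∧ Set.BijOn f {x : M | ltM x c} D

/-- `y = 2^x` in the model `M`, expressed via the existence of a definable function
satisfying the recursion of the base-`2` exponential up to `x`. -/
def IsPow2 (x y : M) : Prop :=
  ∃ f : M → M, DefinableFun₁ f ∧ f (zeroM M) = oneM M ∧
    (∀ z : M, ltM z x → f (addM z (oneM M)) = addM (f z) (f z)) ∧ f x = y

end Arith

namespace Arith

variable {N : Type*} [arith.Structure N]

/-- Formulas with constants for all elements of `N`, in free variables `x_σ` indexed by
binary sequences `σ ∈ 2^n`. -/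
abbrev CFormula (N : Type*) [arith.Structure N] (n : ℕ) : Type _ :=
  (arith[[N]]).Formula (Fin n → Bool)

/-- `d^k` for standard `k`. -/
def powStd (d : N) : ℕ → N
  | 0 => oneM N
  | k + 1 => mulM (powStd d k) d

/-- The binary sequence of length `n` coded by `j < 2^n`. -/
def binOfFin {n : ℕ} (j : Fin (2 ^ n)) : Fin n → Bool := fun i => j.val.testBit i.val

/-- The code `∑_σ b_σ · d^(rank σ)` of a tuple `(b_σ : σ ∈ 2^n)` of elements below `d`,
in base `d`. -/
def tupleCode (d : N) {n : ℕ} (b : (Fin n → Bool) → N) : N :=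
  (List.finRange (2 ^ n)).foldr
    (fun j acc => addM (mulM (b (binOfFin j)) (powStd d j.val)) acc) (zeroM N)

/-- `b` realizes all formulas in `fmls`. -/
def RealizesAll {n : ℕ} (fmls : Set (CFormula N n)) (b : (Fin n → Bool) → N) : Prop :=
  ∀ φ ∈ fmls, φ.Realize b

/-- The set of codes of tuples realizing `fmls` in `N`; this represents the internal set
`p(N)` of realizations of a condition. -/
def realizationCodes (d : N) {n : ℕ} (fmls : Set (CFormula N n)) : Set N :=
  {e | ∃ b : (Fin n → Bool) → N, RealizesAll fmls b ∧ e = tupleCode d b}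

/-- A condition: a finite type `p` of `N` in the variables `(x_σ : σ ∈ 2^{n_p})`
(with parameters from `N`, and no quantifiers over any `x_σ`), such that `p ⊢ x_σ < d`
(where `d = 2^a`), and such that for some positive rational `r = u/v`, internally in `N`,
`|p(N)| > r · d^(2^{n_p})`. -/
structure Condition (N : Type*) [arith.Structure N] (d : N) : Type _ where
  n : ℕ
  fmls : Set (CFormula N n)
  finite : fmls.Finite
  realizable : ∃ b : (Fin n → Bool) → N, RealizesAll fmls b
  bounded : ∀ b : (Fin n → Bool) → N, RealizesAll fmls b → ∀ σ : Fin n → Bool, ltM (b σ) d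
  large : ∃ (u v : ℕ) (c : N), 0 < u ∧ 0 < v ∧
    InternalCard (realizationCodes d fmls) c ∧
    ltM (mulM (numeral N u) (powStd d (2 ^ n))) (mulM (numeral N v) c)

/-- The `m`-reduct of a formula in the variables `(x_σ : σ ∈ 2^n)`: substitute
`x_{σ↾m}` for `x_σ`. -/
def reduct {n m : ℕ} (h : m ≤ n) (φ : CFormula N n) : CFormula N m :=
  φ.relabel fun σ => fun i => σ (Fin.castLE h i)

/-- The order on conditions: `q ≤ p` iff `n_q ≥ n_p` and `q` contains every
`n_q`-ramification of every formula in `p` (i.e. every formula whose `n_p`-reduct lies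
in `p`). -/
def CondLE {d : N} (q p : Condition N d) : Prop :=
  ∃ h : p.n ≤ q.n, ∀ ψ : CFormula N q.n, reduct h ψ ∈ p.fmls → ψ ∈ q.fmls

/-- Formulas in the variables `(x_f : f ∈ 2^ω)` with constants from `N`. -/
abbrev CFormulaInf (N : Type*) [arith.Structure N] : Type _ :=
  (arith[[N]]).Formula (ℕ → Bool)

/-- The `m`-reduct of a formula in the variables `(x_f : f ∈ 2^ω)`: substitute
`x_{f↾m}` for `x_f`. -/
def reductInf {m : ℕ} (φ : CFormulaInf N) : CFormula N m :=
  φ.relabel fun f => fun i => f i.val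

end Arith

/-! Fix `m` and consider the realizations on which the low `m` bits of `b_σ` agree with those of
`F(b_{σ₁}, …, b_{σ_k})`.  Since `σ` is not among the `σ_j`, the other coordinates determine
`b_σ mod 2^m`.  As `2^m` divides `2^a`, overwriting `b_σ mod 2^m` by an arbitrary `t < 2^m` is
therefore an injection from pairs (realization, `t`) into the tuples below `2^a`, so there are at
most `2^{-m}·D` such realizations, where `D = (2^a)^{2^n}`.  If `|p(N)| > D / v`, then for `m = 2v`
at most `2^{-2v}·D ≤ D / 2v` realizations agree on all low `m` bits, so more than `D / 2v` disagree
at some `i < 2v`, hence more than `D / (2v)^2` at one of these `i`.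

Internally in `N`, Gödel's `β` function codes definable sequences by elements; induction over such
codes gives the pigeonhole principle for definable relations and the existence of internal
cardinalities of bounded definable sets.
-/

namespace Arith

section Definability

variable {L : Language} {M : Type*} [L.Structure M] {α β : Type*}

/-- `P` is definable with parameters.  This is a class, so that instance search derives the
definability of an explicitly written predicate from its syntactic shape; for a predicate variable,
closure under substitution is put into the local context. -/
class DefPred (L : Language) {M : Type*} [L.Structure M] {α : Type*} (P : (α → M) → Prop) :
    Prop where
  definable : (Set.univ : Set M).Definable L {v | P v}

/-- `f` is definable with parameters; the analogue of `DefPred` for functions. -/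
class DefFun (L : Language) {M : Type*} [L.Structure M] {α : Type*} (f : (α → M) → M) :
    Prop where
  definableFun : (Set.univ : Set M).DefinableFun L f

theorem DefPred.of_iff {P Q : (α → M) → Prop} (hQ : DefPred L Q) (h : ∀ v, P v ↔ Q v) :
    DefPred L P := by
  rwa [funext fun v => propext (h v)]

theorem DefPred.reindex {P : (α → M) → Prop} (hP : DefPred L P) (g : α → β) :
    DefPred L fun w : β → M => P fun i => w (g i) :=
  ⟨hP.definable.preimage_comp g⟩

instance DefPred.and {P Q : (α → M) → Prop} [hP : DefPred L P] [hQ : DefPred L Q] :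
    DefPred L fun v => P v ∧ Q v :=
  ⟨hP.definable.inter hQ.definable⟩

instance DefPred.or {P Q : (α → M) → Prop} [hP : DefPred L P] [hQ : DefPred L Q] :
    DefPred L fun v => P v ∨ Q v :=
  ⟨hP.definable.union hQ.definable⟩

instance DefPred.not {P : (α → M) → Prop} [hP : DefPred L P] : DefPred L fun v => ¬ P v :=
  ⟨hP.definable.compl⟩

instance DefPred.imp {P Q : (α → M) → Prop} [DefPred L P] [DefPred L Q] :
    DefPred L fun v => P v → Q v :=
  DefPred.of_iff (Q := fun v => ¬ P v ∨ Q v) inferInstance fun _ => imp_iff_not_or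

instance DefPred.iff {P Q : (α → M) → Prop} [DefPred L P] [DefPred L Q] :
    DefPred L fun v => (P v ↔ Q v) :=
  DefPred.of_iff (Q := fun v => (P v → Q v) ∧ (Q v → P v)) inferInstance
    fun _ => iff_iff_implies_and_implies

instance DefPred.forall_finite {ι : Type*} [Finite ι] {P : ι → (α → M) → Prop}
    [hP : ∀ i, DefPred L (P i)] : DefPred L fun v => ∀ i, P i v :=
  ⟨by simpa only [Set.iInter_ofPred] using
    Set.definable_iInter_of_finite fun i => (hP i).definable⟩

instance DefPred.exists_tuple [Finite β] {P : (α → M) → (β → M) → Prop}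
    [hP : DefPred L fun w : α ⊕ β → M => P (fun i => w (.inl i)) fun j => w (.inr j)] :
    DefPred L fun v => ∃ x, P v x :=
  ⟨hP.definable.exists_of_finite⟩

instance DefPred.exists {P : (α → M) → M → Prop}
    [hP : DefPred L fun w : Option α → M => P (fun i => w (some i)) (w none)] :
    DefPred L fun v => ∃ x, P v x := by
  have := hP.reindex (β := α ⊕ Unit) fun i => i.elim (.inr ()) .inl
  refine (DefPred.exists_tuple (P := fun v x => P v (x ())) (hP := this)).of_iff fun v => ?_
  exact ((Equiv.funUnique Unit M).exists_congr_left (p := fun x => P v (x ()))).symm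

instance DefPred.forall {P : (α → M) → M → Prop}
    [DefPred L fun w : Option α → M => P (fun i => w (some i)) (w none)] :
    DefPred L fun v => ∀ x, P v x :=
  DefPred.of_iff (Q := fun v => ¬ ∃ x, ¬ P v x) inferInstance fun _ => not_exists_not.symm

theorem DefPred.subst [Finite β] {P : (β → M) → Prop} (hP : DefPred L P)
    {g : β → (α → M) → M} (hg : ∀ j, DefFun L (g j)) : DefPred L fun v => P fun j => g j v :=
  ⟨hP.definable.preimage_map fun j => (hg j).definableFun⟩

theorem DefPred.subst₁ {P : M → Prop} (hP : DefPred L fun v : Fin 1 → M => P (v 0))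
    {f : (α → M) → M} [hf : DefFun L f] : DefPred L fun v => P (f v) :=
  hP.subst (g := ![f]) (Fin.forall_fin_one.mpr hf)

theorem DefPred.subst₂ {R : M → M → Prop} (hR : DefPred L fun v : Fin 2 → M => R (v 0) (v 1))
    {f g : (α → M) → M} [hf : DefFun L f] [hg : DefFun L g] : DefPred L fun v => R (f v) (g v) :=
  hR.subst (g := ![f, g]) (Fin.forall_fin_two.mpr ⟨hf, hg⟩)

theorem DefPred.relMap₂ (r : L.Relations 2) {f g : (α → M) → M} [hf : DefFun L f]
    [hg : DefFun L g] : DefPred L fun v => Structure.RelMap r ![f v, g v] :=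
  DefPred.subst₂ (R := fun x y => Structure.RelMap r ![x, y])
    ⟨(Set.empty_definable_iff.mpr ⟨r.formula₂ (.var 0) (.var 1), by
      ext; simp [Formula.realize_rel₂]⟩).mono (Set.empty_subset _)⟩

instance DefFun.var (i : α) : DefFun L fun v : α → M => v i :=
  ⟨.proj L⟩

instance DefFun.const (c : M) : DefFun L fun _ : α → M => c :=
  ⟨definableFun_const L α trivial⟩

theorem DefFun.of_graph {f : (α → M) → M}
    (hf : DefPred L fun w : Option α → M => f (fun i => w (some i)) = w none) : DefFun L f :=
  ⟨hf.definable⟩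

theorem DefFun.comp [Finite β] {f : (β → M) → M} (hf : DefFun L f)
    {g : β → (α → M) → M} (hg : ∀ j, DefFun L (g j)) : DefFun L fun v => f fun j => g j v :=
  ⟨.comp (fun j => (hg j).definableFun) hf.definableFun⟩

theorem DefFun.reindex {f : (α → M) → M} (hf : DefFun L f) (g : α → β) :
    DefFun L fun w : β → M => f fun i => w (g i) :=
  ⟨hf.definableFun.preimage_comp (Option.map g)⟩

theorem DefFun.comp₂ {F : M → M → M} (hF : DefFun L fun v : Fin 2 → M => F (v 0) (v 1))
    {f g : (α → M) → M} [hf : DefFun L f] [hg : DefFun L g] : DefFun L fun v => F (f v) (g v) :=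
  hF.comp (g := ![f, g]) (Fin.forall_fin_two.mpr ⟨hf, hg⟩)

theorem DefFun.funMap₂ (F : L.Functions 2) {f g : (α → M) → M} [DefFun L f] [DefFun L g] :
    DefFun L fun v => Structure.funMap F ![f v, g v] :=
  DefFun.comp₂ (F := fun x y => Structure.funMap F ![x, y])
    ⟨.of_empty (by simpa using (F.apply₂ (.var 0) (.var 1)).definableFun_realize)⟩

instance DefFun.ite {P : (α → M) → Prop} [hP : DefPred L P] [∀ v, Decidable (P v)]
    {f g : (α → M) → M} [hf : DefFun L f] [hg : DefFun L g] :
    DefFun L fun v => if P v then f v else g v := by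
  classical
  convert DefFun.mk (.ite hP.definable hf.definableFun hg.definableFun)

instance DefPred.eq {f g : (α → M) → M} [hf : DefFun L f] [hg : DefFun L g] :
    DefPred L fun v => f v = g v :=
  ⟨hf.definableFun.ofPred_eq hg.definableFun⟩

end Definability

section ArithDefinability

variable {N : Type*} [arith.Structure N] {α : Type*}

theorem DefinableFun₁.defFun {F : N → N} (hF : DefinableFun₁ F) {f : (α → N) → N}
    [hf : DefFun arith f] : DefFun arith fun v => F (f v) :=
  DefFun.comp (f := fun v : Fin 1 → N => F (v 0)) (g := fun _ => f)
    (.of_graph ((DefPred.mk hF).reindex ![some 0, none])) fun _ => hf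

theorem DefinableFun.defFun {k : ℕ} {F : (Fin k → N) → N} (hF : DefinableFun F) :
    DefFun arith F :=
  .of_graph (((DefPred.mk hF).reindex (Fin.lastCases none some)).of_iff fun w => by simp)

theorem DefPred.realize {n : ℕ} (φ : CFormula N n) :
    DefPred arith fun v : (Fin n → Bool) → N => φ.Realize v := by
  let g : N → (Set.univ : Set N) := fun x => ⟨x, trivial⟩
  have h : (LHom.constantsOnMap g).IsExpansionOn N := constantsOnMap_isExpansionOn rfl
  have h' : (arith.lhomWithConstantsMap g).IsExpansionOn N := LHom.sumMap_isExpansionOn _ _ _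
  exact ⟨(arith.lhomWithConstantsMap g).onFormula φ, by ext v; simp⟩

theorem DefPred.realizesAll {n : ℕ} {fmls : Set (CFormula N n)} (h : fmls.Finite) :
    DefPred arith fun v : (Fin n → Bool) → N => RealizesAll fmls v := by
  have := h.to_subtype
  exact (DefPred.forall_finite (hP := fun φ : fmls => DefPred.realize φ.1)).of_iff fun v => by
    simp only [RealizesAll, SetCoe.forall]

end ArithDefinability

/-- Class form of `IsPAModel`, so that the algebraic structure of `N` is found by instance
search. -/
class PAModel (N : Type*) [arith.Structure N] : Prop where
  isPAModel : IsPAModel N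

namespace PAModel

variable {N : Type*} [arith.Structure N] {α : Type*}

local instance : Zero N := ⟨zeroM N⟩
local instance : One N := ⟨oneM N⟩
local instance : Add N := ⟨addM⟩
local instance : Mul N := ⟨mulM⟩
local instance : LE N := ⟨leM⟩
local instance : LT N := ⟨ltM⟩

instance defFun_add {f g : (α → N) → N} [DefFun arith f] [DefFun arith g] :
    DefFun arith fun v => f v + g v :=
  DefFun.funMap₂ (L := arith) arithFunc.add

instance defFun_mul {f g : (α → N) → N} [DefFun arith f] [DefFun arith g] :
    DefFun arith fun v => f v * g v :=
  DefFun.funMap₂ (L := arith) arithFunc.mul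

instance defPred_lt {f g : (α → N) → N} [DefFun arith f] [DefFun arith g] :
    DefPred arith fun v => f v < g v :=
  DefPred.relMap₂ (L := arith) arithRel.lt

instance defPred_le {f g : (α → N) → N} [DefFun arith f] [DefFun arith g] :
    DefPred arith fun v => f v ≤ g v :=
  DefPred.or (P := fun v => f v < g v) (Q := fun v => f v = g v)

variable [PAModel N]

@[elab_as_elim]
theorem induction_on {P : N → Prop} [hP : DefPred arith fun v : Fin 1 → N => P (v 0)] (x : N)
    (zero : P 0) (succ : ∀ x, P x → P (x + 1)) : P x :=
  (isPAModel (N := N)).2.2.2.2.2.2.2.2 {x | P x} hP.definable zero succ x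

protected theorem add_zero (x : N) : x + 0 = x := isPAModel.1 x

protected theorem add_succ (x y : N) : x + (y + 1) = x + y + 1 := isPAModel.2.1 x y

protected theorem mul_zero (x : N) : x * 0 = 0 := isPAModel.2.2.1 x

protected theorem mul_succ (x y : N) : x * (y + 1) = x * y + x := isPAModel.2.2.2.1 x y

protected theorem not_lt_zero (x : N) : ¬ x < 0 := isPAModel.2.2.2.2.1 x

protected theorem lt_succ_iff (x y : N) : x < y + 1 ↔ x < y ∨ x = y :=
  isPAModel.2.2.2.2.2.1 x y

protected theorem succ_ne_zero (x : N) : x + 1 ≠ 0 := isPAModel.2.2.2.2.2.2.1 x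

protected theorem succ_injective : Function.Injective (· + 1 : N → N) :=
  isPAModel.2.2.2.2.2.2.2.1

attribute [local simp] PAModel.add_zero PAModel.add_succ PAModel.mul_zero PAModel.mul_succ

protected theorem zero_add (x : N) : 0 + x = x := by
  refine induction_on x ?_ fun x ih => ?_ <;> simp [*]

protected theorem succ_add (x y : N) : x + 1 + y = x + y + 1 := by
  refine induction_on y ?_ fun y ih => ?_ <;> simp [*]

protected theorem add_assoc (x y z : N) : x + y + z = x + (y + z) := by
  refine induction_on z ?_ fun z ih => ?_ <;> simp [*]

protected theorem add_comm (x y : N) : x + y = y + x := by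
  refine induction_on y ?_ fun y ih => ?_ <;> simp [*, PAModel.zero_add, PAModel.succ_add]

protected theorem add_right_cancel (x y z : N) (h : x + z = y + z) : x = y := by
  revert h
  refine induction_on z ?_ fun z ih h => ih (PAModel.succ_injective ?_)
  · simp
  · simpa using h

protected theorem zero_mul (x : N) : 0 * x = 0 := by
  refine induction_on x ?_ fun x ih => ?_ <;> simp [*]

protected theorem succ_mul (x y : N) : (x + 1) * y = x * y + y := by
  refine induction_on y ?_ fun y ih => ?_
  · simp
  · rw [PAModel.mul_succ, PAModel.mul_succ, ih, PAModel.add_succ, PAModel.add_succ,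
      PAModel.add_assoc _ y x, PAModel.add_assoc _ x y, PAModel.add_comm x y]

protected theorem mul_comm (x y : N) : x * y = y * x := by
  refine induction_on y ?_ fun y ih => ?_ <;> simp [*, PAModel.zero_mul, PAModel.succ_mul]

protected theorem mul_add (x y z : N) : x * (y + z) = x * y + x * z := by
  refine induction_on z ?_ fun z ih => ?_
  · simp
  · rw [PAModel.add_succ, PAModel.mul_succ, PAModel.mul_succ, ih, PAModel.add_assoc]

protected theorem mul_assoc (x y z : N) : x * y * z = x * (y * z) := by
  refine induction_on z ?_ fun z ih => ?_
  · simp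
  · rw [PAModel.mul_succ, PAModel.mul_succ, PAModel.mul_add, ih]

protected theorem mul_one (x : N) : x * 1 = x := by
  rw [← PAModel.zero_add 1, PAModel.mul_succ, PAModel.mul_zero, PAModel.zero_add]

instance : CommSemiring N where
  nsmul := nsmulRec
  natCast := numeral N
  npow n x := powStd x n
  add_assoc := PAModel.add_assoc
  zero_add := PAModel.zero_add
  add_zero := PAModel.add_zero
  add_comm := PAModel.add_comm
  left_distrib := PAModel.mul_add
  right_distrib x y z := by simp only [PAModel.mul_comm _ z, PAModel.mul_add]
  zero_mul := PAModel.zero_mul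
  mul_zero := PAModel.mul_zero
  mul_assoc := PAModel.mul_assoc
  one_mul x := (PAModel.mul_comm _ _).trans (PAModel.mul_one x)
  mul_one := PAModel.mul_one
  mul_comm := PAModel.mul_comm

theorem eq_zero_or_succ (x : N) : x = 0 ∨ ∃ y, x = y + 1 :=
  induction_on x (.inl rfl) fun x _ => .inr ⟨x, rfl⟩

theorem lt_iff_exists {x y : N} : x < y ↔ ∃ z, y = x + z + 1 := by
  refine induction_on y ?_ fun y ih => ?_
  · exact iff_of_false (PAModel.not_lt_zero x) fun ⟨z, hz⟩ => PAModel.succ_ne_zero _ hz.symm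
  · rw [PAModel.lt_succ_iff, ih]
    constructor
    · rintro (⟨z, rfl⟩ | rfl)
      · exact ⟨z + 1, by ring⟩
      · exact ⟨0, by ring⟩
    · rintro ⟨z, hz⟩
      obtain rfl : y = x + z := PAModel.succ_injective hz
      obtain rfl | ⟨w, rfl⟩ := eq_zero_or_succ z
      · exact .inr (add_zero x).symm
      · exact .inl ⟨w, (add_assoc _ _ _).symm⟩

theorem le_iff_exists {x y : N} : x ≤ y ↔ ∃ z, y = x + z := by
  refine (or_congr_left lt_iff_exists).trans ⟨?_, ?_⟩
  · rintro (⟨z, rfl⟩ | rfl)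
    · exact ⟨z + 1, add_assoc _ _ _⟩
    · exact ⟨0, (add_zero x).symm⟩
  · rintro ⟨z, rfl⟩
    obtain rfl | ⟨w, rfl⟩ := eq_zero_or_succ z
    · exact .inr (add_zero x).symm
    · exact .inl ⟨w, (add_assoc _ _ _).symm⟩

protected theorem le_total (x y : N) : x ≤ y ∨ y ≤ x := by
  refine induction_on x (.inl (le_iff_exists.mpr ⟨y, (zero_add y).symm⟩)) fun x ih => ?_
  rcases ih with (h | rfl) | h
  · obtain ⟨z, rfl⟩ := lt_iff_exists.mp h
    exact .inl (le_iff_exists.mpr ⟨z, by ring⟩)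
  · exact .inr (le_iff_exists.mpr ⟨1, rfl⟩)
  · obtain ⟨z, rfl⟩ := le_iff_exists.mp h
    exact .inr (le_iff_exists.mpr ⟨z + 1, add_assoc _ _ _⟩)

protected theorem lt_irrefl (x : N) : ¬ x < x := fun h => by
  obtain ⟨z, hz⟩ := lt_iff_exists.mp h
  refine PAModel.succ_ne_zero z (PAModel.add_right_cancel _ _ x ?_)
  calc z + 1 + x = x + z + 1 := by ring
    _ = 0 + x := by rw [← hz, zero_add]

open Classical in
noncomputable instance : LinearOrder N where
  le_refl _ := .inr rfl
  le_trans _ _ _ h₁ h₂ := by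
    obtain ⟨u, rfl⟩ := le_iff_exists.mp h₁
    obtain ⟨v, rfl⟩ := le_iff_exists.mp h₂
    exact le_iff_exists.mpr ⟨u + v, add_assoc _ _ _⟩
  lt_iff_le_not_ge x y := by
    refine ⟨fun h => ⟨.inl h, fun h' => ?_⟩,
      fun ⟨h, h'⟩ => h.resolve_right fun h => h' (.inr h.symm)⟩
    obtain ⟨z, rfl⟩ := lt_iff_exists.mp h
    obtain ⟨w, hw⟩ := le_iff_exists.mp h'
    exact PAModel.lt_irrefl x (lt_iff_exists.mpr ⟨z + w, hw.trans (by ring)⟩)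
  le_antisymm x y h₁ h₂ := by
    refine h₁.resolve_left fun h => ?_
    obtain ⟨z, rfl⟩ := lt_iff_exists.mp h
    obtain ⟨w, hw⟩ := le_iff_exists.mp h₂
    exact PAModel.lt_irrefl x (lt_iff_exists.mpr ⟨z + w, hw.trans (by ring)⟩)
  le_total := PAModel.le_total
  toDecidableLE := Classical.decRel _

instance : CanonicallyOrderedAdd N where
  exists_add_of_le := le_iff_exists.mp
  le_add_self x y := le_iff_exists.mpr ⟨y, add_comm y x⟩
  le_self_add _ y := le_iff_exists.mpr ⟨y, rfl⟩

instance : IsStrictOrderedRing N where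
  add_le_add_left _ _ h z := by
    obtain ⟨u, rfl⟩ := le_iff_exists.mp h
    exact le_iff_exists.mpr ⟨u, by ring⟩
  le_of_add_le_add_left x _ _ h := by
    obtain ⟨u, hu⟩ := le_iff_exists.mp h
    exact le_iff_exists.mpr ⟨u, PAModel.add_right_cancel _ _ x (by rw [add_comm, hu]; ring)⟩
  zero_le_one := le_iff_exists.mpr ⟨1, (zero_add 1).symm⟩
  exists_pair_ne := ⟨0 + 1, 0, PAModel.succ_ne_zero 0⟩
  mul_lt_mul_of_pos_left x hx y z h := by
    obtain ⟨u, rfl⟩ := lt_iff_exists.mp h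
    obtain ⟨w, rfl⟩ := lt_iff_exists.mp hx
    exact lt_iff_exists.mpr ⟨(w + 1) * u + w, by ring⟩
  mul_lt_mul_of_pos_right x hx y z h := by
    obtain ⟨u, rfl⟩ := lt_iff_exists.mp h
    obtain ⟨w, rfl⟩ := lt_iff_exists.mp hx
    exact lt_iff_exists.mpr ⟨(w + 1) * u + w, by ring⟩

noncomputable instance : SuccAddOrder N where
  toSuccOrder := SuccOrder.ofSuccLeIff (· + 1) fun {x y} => by
    simp only [le_iff_exists, lt_iff_exists, add_right_comm x]
  succ_eq_add_one _ := rfl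

end PAModel

section Division

section DiscreteSemiring

variable {R : Type*} [CommSemiring R] [LinearOrder R] [IsStrictOrderedRing R]
  [CanonicallyOrderedAdd R] [SuccAddOrder R] {q r q' r' y : R}

theorem mul_add_lt_mul_add (hr : r < y) (hq : q < q') : q * y + r < q' * y + r' :=
  calc q * y + r < q * y + y := by gcongr
    _ = (q + 1) * y := by ring
    _ ≤ q' * y := by gcongr; exact Order.add_one_le_of_lt hq
    _ ≤ q' * y + r' := le_self_add

theorem quotient_remainder_unique (h : q * y + r = q' * y + r') (hr : r < y) (hr' : r' < y) :
    q = q' ∧ r = r' := by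
  obtain rfl : q = q' := by
    by_contra hq
    rcases lt_or_gt_of_ne hq with hq | hq
    · exact (mul_add_lt_mul_add hr hq).ne h
    · exact (mul_add_lt_mul_add hr' hq).ne' h
  exact ⟨rfl, add_left_cancel h⟩

end DiscreteSemiring

variable {N : Type*} [arith.Structure N] [PAModel N] {α : Type*} {x y z q r : N}

/-- `q` and `r` are the quotient and remainder of `x` by `y`, with quotient `0` and remainder
`x` when `y = 0`. -/
def IsDivMod (x y q r : N) : Prop := x = q * y + r ∧ (r < y ∨ y = 0 ∧ q = 0)

theorem exists_isDivMod (x y : N) : ∃ q r, IsDivMod x y q r := by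
  obtain rfl | hy := eq_zero_or_pos y
  · exact ⟨0, x, by ring, .inr ⟨rfl, rfl⟩⟩
  suffices ∃ q r, x = q * y + r ∧ r < y from this.imp fun q => .imp fun r => .imp_right .inl
  refine PAModel.induction_on x ⟨0, 0, by ring, hy⟩ fun x ih => ?_
  obtain ⟨q, r, rfl, hr⟩ := ih
  obtain h | h := (Order.add_one_le_of_lt hr).lt_or_eq
  · exact ⟨q, r + 1, add_assoc _ _ _, h⟩
  · exact ⟨q + 1, 0, by rw [← h]; ring, hy⟩

theorem IsDivMod.unique {q' r' : N} (h : IsDivMod x y q r) (h' : IsDivMod x y q' r') :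
    q = q' ∧ r = r' := by
  obtain ⟨rfl, hr | ⟨rfl, rfl⟩⟩ := h <;> obtain ⟨h', hr' | ⟨hy, rfl⟩⟩ := h'
  · exact quotient_remainder_unique h' hr hr'
  · exact absurd (hy ▸ hr) not_lt_zero
  · exact absurd hr' not_lt_zero
  · exact ⟨rfl, by simpa using h'⟩

noncomputable instance : Div N := ⟨fun x y => (exists_isDivMod x y).choose⟩

noncomputable instance : Mod N := ⟨fun x y => (exists_isDivMod x y).choose_spec.choose⟩

theorem isDivMod_div_mod (x y : N) : IsDivMod x y (x / y) (x % y) :=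
  (exists_isDivMod x y).choose_spec.choose_spec

instance DefFun.div {f g : (α → N) → N} [hf : DefFun arith f] [hg : DefFun arith g] :
    DefFun arith fun v => f v / g v := by
  refine DefFun.comp₂ (F := (· / ·)) (.of_graph (.of_iff (Q := fun w => ∃ r,
    w (some 0) = w none * w (some 1) + r ∧ (r < w (some 1) ∨ w (some 1) = 0 ∧ w none = 0))
    inferInstance fun w => ⟨?_, fun ⟨r, h⟩ => ((isDivMod_div_mod _ _).unique h).1⟩))
  exact fun h => ⟨_, h ▸ isDivMod_div_mod _ _⟩

instance DefFun.mod {f g : (α → N) → N} [hf : DefFun arith f] [hg : DefFun arith g] :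
    DefFun arith fun v => f v % g v := by
  refine DefFun.comp₂ (F := (· % ·)) (.of_graph (.of_iff (Q := fun w => ∃ q,
    w (some 0) = q * w (some 1) + w none ∧ (w none < w (some 1) ∨ w (some 1) = 0 ∧ q = 0))
    inferInstance fun w => ⟨?_, fun ⟨q, h⟩ => ((isDivMod_div_mod _ _).unique h).2⟩))
  exact fun h => ⟨_, h ▸ isDivMod_div_mod _ _⟩

theorem div_mul_add_mod (x y : N) : x / y * y + x % y = x := (isDivMod_div_mod x y).1.symm

theorem mod_lt (x : N) (hy : 0 < y) : x % y < y :=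
  (isDivMod_div_mod x y).2.resolve_right fun h => hy.ne' h.1

theorem mul_add_div (q : N) (hr : r < y) : (q * y + r) / y = q :=
  ((isDivMod_div_mod _ y).unique ⟨rfl, .inl hr⟩).1

theorem mul_add_mod (q : N) (hr : r < y) : (q * y + r) % y = r :=
  ((isDivMod_div_mod _ y).unique ⟨rfl, .inl hr⟩).2

theorem add_mod_of_dvd (x : N) (hy : 0 < y) (hz : y ∣ z) : (x + z) % y = x % y := by
  obtain ⟨c, rfl⟩ := hz
  calc (x + y * c) % y = ((x / y + c) * y + x % y) % y := by
        conv_lhs => rw [← div_mul_add_mod x y]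
        ring_nf
    _ = x % y := mul_add_mod _ (mod_lt x hy)

theorem div_lt_of_lt_mul (h : x < y * z) : x / z < y := by
  by_contra! hy
  refine absurd h (not_lt.mpr ?_)
  calc y * z ≤ x / z * z := by gcongr
    _ ≤ x / z * z + x % z := le_self_add
    _ = x := div_mul_add_mod x z

theorem mod_mul (x : N) (hy : 0 < y) (hz : 0 < z) :
    x % (y * z) = x / y % z * y + x % y := by
  have hlt : x / y % z * y + x % y < z * y + 0 := mul_add_lt_mul_add (mod_lt x hy) (mod_lt _ hz)
  calc x % (y * z) = (x / y / z * (y * z) + (x / y % z * y + x % y)) % (y * z) := by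
        conv_lhs => rw [← div_mul_add_mod x y, ← div_mul_add_mod (x / y) z]
        ring_nf
    _ = x / y % z * y + x % y := mul_add_mod _ (by rwa [add_zero, mul_comm z y] at hlt)

theorem digitB_iff {i : ℕ} : digitB x i ↔ x / 2 ^ i % 2 = 1 := by
  have numeral_two_pow (m : ℕ) : numeral N (2 ^ m) = 2 ^ m := Nat.cast_pow 2 m
  simp only [digitB, numeral_two_pow]
  constructor
  · rintro ⟨u, v, hx, hv⟩
    obtain rfl : x = (u * 2 + 1) * 2 ^ i + v := hx.trans (by
      change u * 2 ^ (i + 1) + (2 ^ i + v) = _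
      ring)
    rw [mul_add_div _ hv, mul_add_mod _ one_lt_two]
  · intro h
    refine ⟨x / 2 ^ i / 2, x % 2 ^ i, ?_, mod_lt x (by positivity)⟩
    calc x = (x / 2 ^ i / 2 * 2 + x / 2 ^ i % 2) * 2 ^ i + x % 2 ^ i := by
          rw [div_mul_add_mod, div_mul_add_mod]
      _ = x / 2 ^ i / 2 * 2 ^ (i + 1) + (2 ^ i + x % 2 ^ i) := by rw [h]; ring

theorem mod_two_eq_of_digitB_iff {i : ℕ} (h : digitB x i ↔ digitB y i) :
    x / 2 ^ i % 2 = y / 2 ^ i % 2 := by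
  have eq_zero_or_one (z : N) : z % 2 = 0 ∨ z % 2 = 1 :=
    Order.le_one_iff.mp (Order.lt_two_iff.mp (mod_lt z two_pos))
  simp only [digitB_iff] at h
  rcases eq_zero_or_one (x / 2 ^ i) with hx | hx <;>
    rcases eq_zero_or_one (y / 2 ^ i) with hy | hy <;> simp_all

theorem mod_two_pow_eq_of_digitB_iff {m : ℕ} (h : ∀ i < m, (digitB x i ↔ digitB y i)) :
    x % 2 ^ m = y % 2 ^ m := by
  induction m with
  | zero =>
    have mod_one (z : N) : z % 1 = 0 := Order.lt_one_iff.mp (mod_lt z one_pos)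
    rw [pow_zero, mod_one, mod_one]
  | succ m ih =>
    have hpos : (0 : N) < 2 ^ m := by positivity
    rw [pow_succ, mod_mul x hpos two_pos, mod_mul y hpos two_pos,
      mod_two_eq_of_digitB_iff (h m m.lt_succ_self), ih fun i hi => h i (hi.trans m.lt_succ_self)]

end Division

section Coding

section InvertibleMod

variable {R : Type*} [CommSemiring R] {x y m : R}

/-- The elements with a multiplicative inverse modulo `m`, phrased without subtraction. -/
def invertibleMod (m : R) : Submonoid R where
  carrier := {x | ∃ u w, u * x = w * m + 1}
  one_mem' := ⟨1, 0, by ring⟩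
  mul_mem' := by
    rintro x y ⟨u₁, w₁, h₁⟩ ⟨u₂, w₂, h₂⟩
    refine ⟨u₁ * u₂, w₁ * w₂ * m + w₁ + w₂, ?_⟩
    calc u₁ * u₂ * (x * y) = (u₁ * x) * (u₂ * y) := by ring
      _ = (w₁ * w₂ * m + w₁ + w₂) * m + 1 := by rw [h₁, h₂]; ring

theorem mem_invertibleMod_of_dvd (h : x ∣ y) (hy : y ∈ invertibleMod m) :
    x ∈ invertibleMod m := by
  obtain ⟨u, w, hu⟩ := hy
  obtain ⟨c, rfl⟩ := h
  exact ⟨u * c, w, by rw [← hu]; ring⟩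

theorem mul_add_mem_invertibleMod (c : R) (hx : x ∈ invertibleMod m) :
    c * m + x ∈ invertibleMod m := by
  obtain ⟨u, w, hu⟩ := hx
  exact ⟨u, u * c + w, by rw [mul_add, hu]; ring⟩

theorem add_one_mem_invertibleMod (x : R) : x + 1 ∈ invertibleMod (x + 1 + 1) :=
  ⟨x + 1, x, by ring⟩

end InvertibleMod

variable {N : Type*} [arith.Structure N] [PAModel N] {α : Type*}

/-- The `i`-th modulus of Gödel's `β` function with parameter `b`. -/
def betaModulus (b i : N) : N := 1 + (i + 1) * b

/-- Gödel's `β` function: the `i`-th term of the sequence coded by `a` and `b`. -/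
noncomputable def beta (a b i : N) : N := a % betaModulus b i

instance DefFun.betaModulus {f g : (α → N) → N} [DefFun arith f] [DefFun arith g] :
    DefFun arith fun v => betaModulus (f v) (g v) :=
  inferInstanceAs (DefFun arith fun v => 1 + (g v + 1) * f v)

instance DefFun.beta {f g h : (α → N) → N} [DefFun arith f] [DefFun arith g] [DefFun arith h] :
    DefFun arith fun v => beta (f v) (g v) (h v) :=
  DefFun.mod

/-- Modulo `betaModulus b l` we have `(l + 1) * b ≡ -1`, so divisors of `b` are invertible, and
`(l + 1) * betaModulus b i ≡ l - i`. -/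
theorem betaModulus_mem_invertibleMod {b i l : N} (hb : 0 < b) (hil : i < l)
    (h : ∀ e < l, e + 1 ∣ b) : betaModulus b i ∈ invertibleMod (betaModulus b l) := by
  obtain ⟨e, rfl⟩ := PAModel.lt_iff_exists.mp hil
  obtain ⟨s, hs⟩ := exists_add_of_le
    (Order.add_one_le_of_lt (mul_pos (by positivity : 0 < i + e + 1 + 1) hb))
  have hmod : betaModulus b (i + e + 1) = s + 1 + 1 := by
    rw [betaModulus, hs]
    ring
  have hdvd : e + 1 ∣ s + 1 := by
    rw [(hs.trans (by ring) : _ = s + 1).symm]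
    exact (h e (Order.lt_add_one_iff.mpr le_add_self)).mul_left _
  have hsub : (i + e + 1 + 1) * betaModulus b i =
      (i + 1) * betaModulus b (i + e + 1) + (e + 1) := by
    simp only [betaModulus]
    ring
  refine mem_invertibleMod_of_dvd (hsub ▸ dvd_mul_left _ _) (mul_add_mem_invertibleMod _ ?_)
  exact hmod ▸ mem_invertibleMod_of_dvd hdvd (add_one_mem_invertibleMod s)

theorem exists_add_mul_mod_eq {x y m : N} (hx : x ∈ invertibleMod m) (hy : y < m) (a : N) :
    ∃ t, (a + x * t) % m = y := by
  obtain ⟨u, w, hu⟩ := hx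
  obtain ⟨m, rfl⟩ : ∃ m', m = m' + 1 :=
    (PAModel.eq_zero_or_succ m).resolve_left (zero_le.trans_lt hy).ne'
  refine ⟨u * (y + m * a), ?_⟩
  have : a + x * (u * (y + m * a)) = (w * (y + m * a) + a) * (m + 1) + y :=
    calc _ = a + (u * x) * (y + m * a) := by ring
      _ = _ := by rw [hu]; ring
  rw [this, mul_add_mod _ hy]

theorem exists_bound {R : N → N → Prop} [hR : DefPred arith fun v : Fin 2 → N => R (v 0) (v 1)]
    (n : N) (h : ∀ i < n, ∃ y, R i y) : ∃ B, ∀ i < n, ∃ y < B, R i y := by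
  have hR' (α : Type) (f g : (α → N) → N) [DefFun arith f] [DefFun arith g] :
    DefPred arith fun v => R (f v) (g v) := hR.subst₂
  revert h
  refine PAModel.induction_on n (fun _ => ⟨0, fun i hi => absurd hi not_lt_zero⟩) fun n ih h => ?_
  obtain ⟨B, hB⟩ := ih fun i hi => h i (hi.trans (lt_add_one n))
  obtain ⟨y, hy⟩ := h n (lt_add_one n)
  refine ⟨max B (y + 1), fun i hi => ?_⟩
  obtain hi | rfl := (Order.le_of_lt_add_one hi).lt_or_eq
  · obtain ⟨z, hz, hz'⟩ := hB i hi
    exact ⟨z, lt_max_of_lt_left hz, hz'⟩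
  · exact ⟨y, lt_max_of_lt_right (lt_add_one y), hy⟩

instance DefPred.mem_invertibleMod {f g : (α → N) → N} [hf : DefFun arith f]
    [hg : DefFun arith g] : DefPred arith fun v => f v ∈ invertibleMod (g v) :=
  have := hf.reindex (β := Option (Option α)) fun i => some (some i)
  have := hg.reindex (β := Option (Option α)) fun i => some (some i)
  DefPred.of_iff (Q := fun v => ∃ u w, u * f v = w * g v + 1) inferInstance fun _ => Iff.rfl

theorem exists_common_multiple_mem (S : Submonoid N)
    [hS : DefPred arith fun v : Fin 1 → N => v 0 ∈ S] {m : N → N}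
    [hm : DefFun arith fun v : Fin 1 → N => m (v 0)] (n : N) (h : ∀ i < n, m i ∈ S) :
    ∃ b ∈ S, ∀ i < n, m i ∣ b := by
  have hS' (α : Type) (f : (α → N) → N) [DefFun arith f] : DefPred arith fun v => f v ∈ S :=
    hS.subst₁ (P := (· ∈ S))
  have hm' (α : Type) (f : (α → N) → N) [hf : DefFun arith f] : DefFun arith fun v => m (f v) :=
    hm.comp (g := fun _ => f) fun _ => hf
  revert h
  refine PAModel.induction_on n (fun _ => ⟨1, S.one_mem, fun i hi => absurd hi not_lt_zero⟩)
    fun n ih h => ?_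
  obtain ⟨b, hb, hdvd⟩ := ih fun i hi => h i (hi.trans (lt_add_one n))
  refine ⟨b * m n, S.mul_mem hb (h n (lt_add_one n)), fun i hi => ?_⟩
  obtain hi | rfl := (Order.le_of_lt_add_one hi).lt_or_eq
  · exact (hdvd i hi).mul_right _
  · exact dvd_mul_left _ _

theorem exists_forall_mod {m : N → N} [hm : DefFun arith fun v : Fin 1 → N => m (v 0)]
    {R : N → N → Prop} [hR : DefPred arith fun v : Fin 2 → N => R (v 0) (v 1)] (n : N)
    (hinv : ∀ k < n, ∀ i < k, m i ∈ invertibleMod (m k)) (h : ∀ i < n, ∃ y < m i, R i y) :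
    ∃ a, ∀ i < n, R i (a % m i) := by
  have hR' (α : Type) (f g : (α → N) → N) [DefFun arith f] [DefFun arith g] :
    DefPred arith fun v => R (f v) (g v) := hR.subst₂
  have hm' (α : Type) (f : (α → N) → N) [hf : DefFun arith f] : DefFun arith fun v => m (f v) :=
    hm.comp (g := fun _ => f) fun _ => hf
  revert hinv h
  refine PAModel.induction_on n (fun _ _ => ⟨0, fun i hi => absurd hi not_lt_zero⟩)
    fun n ih hinv h => ?_
  have hlt {i : N} (hi : i < n) : i < n + 1 := hi.trans (lt_add_one n)
  obtain ⟨a, ha⟩ := ih (fun k hk => hinv k (hlt hk)) fun i hi => h i (hlt hi)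
  obtain ⟨y, hym, hy⟩ := h n (lt_add_one n)
  obtain ⟨b, hb, hdvd⟩ := exists_common_multiple_mem (invertibleMod (m n)) n
    (hinv n (lt_add_one n))
  obtain ⟨t, ht⟩ := exists_add_mul_mod_eq hb hym a
  refine ⟨a + b * t, fun i hi => ?_⟩
  obtain hi | rfl := (Order.le_of_lt_add_one hi).lt_or_eq
  · obtain ⟨_, hpos, -⟩ := h i (hlt hi)
    rw [add_mod_of_dvd a (zero_le.trans_lt hpos) ((hdvd i hi).mul_right t)]
    exact ha i hi
  · rwa [ht]

theorem exists_forall_beta {R : N → N → Prop}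
    [hR : DefPred arith fun v : Fin 2 → N => R (v 0) (v 1)] (n : N) (h : ∀ i < n, ∃ y, R i y) :
    ∃ a b, ∀ i < n, R i (beta a b i) := by
  obtain ⟨B, hB⟩ := exists_bound n h
  have : DefPred arith fun v : Fin 1 → N => v 0 ∈ Submonoid.pos N :=
    inferInstanceAs (DefPred arith fun v => 0 < v 0)
  obtain ⟨b, hb, hdvd⟩ := exists_common_multiple_mem (Submonoid.pos N) (m := (· + 1)) n
    fun i _ => (by positivity : 0 < i + 1)
  have hpos : 0 < b * (B + 1) := mul_pos hb (by positivity)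
  have hlt {i y : N} (hy : y < B) : y < betaModulus (b * (B + 1)) i :=
    calc y < B + 1 := hy.trans (lt_add_one B)
      _ ≤ b * (B + 1) := le_mul_of_one_le_left zero_le (Order.one_le_iff_pos.mpr hb)
      _ ≤ (i + 1) * (b * (B + 1)) := le_mul_of_one_le_left zero_le le_add_self
      _ ≤ betaModulus (b * (B + 1)) i := le_add_self
  obtain ⟨a, ha⟩ := exists_forall_mod (R := R) (m := betaModulus (b * (B + 1))) n
    (fun k hk i hi => betaModulus_mem_invertibleMod hpos hi
      fun e he => (hdvd e (he.trans hk)).mul_right _)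
    fun i hi => (hB i hi).imp fun y => .imp_left hlt
  exact ⟨a, _, ha⟩

end Coding

section InternalCardinality

open Set

variable {N : Type*} [arith.Structure N] [PAModel N] {α : Type*}

instance DefFun.swap {f g h : (α → N) → N} [DefFun arith f] [DefFun arith g] [DefFun arith h] :
    DefFun arith fun v => Equiv.swap (f v) (g v) (h v) :=
  inferInstanceAs (DefFun arith fun v => if h v = f v then g v else if h v = g v then f v else h v)

theorem not_injOn_beta (y : N) : ∀ a b, (∀ i < y + 1, beta a b i < y) →
    ¬ ∀ i < y + 1, ∀ j < y + 1, beta a b i = beta a b j → i = j := by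
  refine PAModel.induction_on y
    (fun a b hlt _ => not_lt_zero (hlt 0 (zero_lt_one.trans_le le_add_self)))
    fun y ih a b hlt hinj => ?_
  have hlast : y + 1 < y + 1 + 1 := lt_add_one _
  obtain ⟨a', b', hb'⟩ := exists_forall_beta
    (R := fun i z => z = Equiv.swap (beta a b (y + 1)) y (beta a b i)) (y + 1) fun i _ => ⟨_, rfl⟩
  refine ih a' b' (fun i hi => ?_) fun i hi j hj hij => ?_
  · have hne : beta a b i ≠ beta a b (y + 1) := fun h =>
      hi.ne (hinj i (hi.trans hlast) _ hlast h)
    rw [hb' i hi, Equiv.swap_apply_def, if_neg hne]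
    split_ifs with hy
    · exact (Order.le_of_lt_add_one (hlt _ hlast)).lt_of_ne (hy ▸ hne.symm)
    · exact (Order.le_of_lt_add_one (hlt i (hi.trans hlast))).lt_of_ne hy
  · rw [hb' i hi, hb' j hj] at hij
    exact hinj i (hi.trans hlast) j (hj.trans hlast) (Equiv.injective _ hij)

theorem le_of_definable_injection {R : N → N → Prop}
    [hR : DefPred arith fun v : Fin 2 → N => R (v 0) (v 1)] {x y : N}
    (htotal : ∀ i < x, ∃ z < y, R i z)
    (hinj : ∀ i < x, ∀ j < x, ∀ z, R i z → R j z → i = j) : x ≤ y := by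
  by_contra! hxy
  have hyx {i : N} (hi : i < y + 1) : i < x := (Order.le_of_lt_add_one hi).trans_lt hxy
  obtain ⟨a, b, hab⟩ := exists_forall_beta (R := fun i z => z < y ∧ R i z) (y + 1)
    fun i hi => htotal i (hyx hi)
  exact not_injOn_beta y a b (fun i hi => (hab i hi).1) fun i hi j hj hij =>
    hinj i (hyx hi) j (hyx hj) _ (hab i hi).2 (hij ▸ (hab j hj).2)

theorem exists_bijOn_beta_insert {S : Set N} {a b c x : N} (h : BijOn (beta a b) (Iio c) S)
    (hx : x ∉ S) : ∃ a' b', BijOn (beta a' b') (Iio (c + 1)) (insert x S) := by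
  obtain ⟨a', b', hb'⟩ := exists_forall_beta
    (R := fun i z => z = if i = c then x else beta a b i) (c + 1) fun i _ => ⟨_, rfl⟩
  have hlast : beta a' b' c = x := by simpa using hb' c (lt_add_one c)
  have hinit : EqOn (beta a b) (beta a' b') (Iio c) := fun i hi => by
    simpa [(mem_Iio.mp hi).ne] using (hb' i (hi.trans (lt_add_one c))).symm
  refine ⟨a', b', ?_⟩
  rw [← Order.succ_eq_add_one, Order.Iio_succ_eq_insert, ← hlast]
  exact (h.congr hinit).insert (hlast ▸ hx)

theorem exists_internalCard {S : Set N} [hS : DefPred arith fun v : Fin 1 → N => v 0 ∈ S] (B : N)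
    (hB : ∀ x ∈ S, x < B) : ∃ c, InternalCard S c := by
  have hS' (α : Type) (f : (α → N) → N) [DefFun arith f] : DefPred arith fun v => f v ∈ S :=
    hS.subst₁ (P := (· ∈ S))
  have hdef : DefPred arith fun v : Fin 1 → N =>
      ∃ c a b, BijOn (beta a b) (Iio c) (S ∩ Iio (v 0)) :=
    inferInstanceAs (DefPred arith fun v => ∃ c a b,
      (∀ i, i < c → beta a b i ∈ S ∧ beta a b i < v 0) ∧
      (∀ i, i < c → ∀ j, j < c → beta a b i = beta a b j → i = j) ∧
      ∀ x, x ∈ S ∧ x < v 0 → ∃ i, i < c ∧ beta a b i = x)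
  obtain ⟨c, a, b, h⟩ : ∃ c a b, BijOn (beta a b) (Iio c) (S ∩ Iio B) := by
    refine PAModel.induction_on B ⟨0, 0, 0, ?_⟩ fun B ih => ?_
    · simp
    obtain ⟨c, a, b, h⟩ := ih
    rw [← Order.succ_eq_add_one, Order.Iio_succ_eq_insert]
    by_cases hBS : B ∈ S
    · rw [inter_insert_of_mem hBS]
      exact ⟨c + 1, exists_bijOn_beta_insert h fun hB => lt_irrefl B hB.2⟩
    · rw [inter_insert_of_notMem hBS]
      exact ⟨c, a, b, h⟩
  rw [inter_eq_left (t := Iio B) |>.mpr hB] at h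
  exact ⟨c, beta a b, DefPred.eq.definable, h⟩

namespace InternalCard

variable {S T U : Set N} {a b c e x : N}

theorem defPred (hS : InternalCard S c) : DefPred arith fun v : Fin 1 → N => v 0 ∈ S := by
  obtain ⟨f, hf, hfS⟩ := hS
  have hf' (α : Type) (g : (α → N) → N) [DefFun arith g] : DefFun arith fun v => f (g v) :=
    hf.defFun
  refine DefPred.of_iff (Q := fun v => ∃ i, i < c ∧ f i = v 0) inferInstance fun v => ?_
  rw [← hfS.image_eq]
  rfl

theorem exists_of_subset (hS : InternalCard S c) (hTS : T ⊆ S)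
    [hT : DefPred arith fun v : Fin 1 → N => v 0 ∈ T] : ∃ c, InternalCard T c := by
  obtain ⟨f, hf, hfS⟩ := hS
  have hf' (α : Type) (g : (α → N) → N) [DefFun arith g] : DefFun arith fun v => f (g v) :=
    hf.defFun
  obtain ⟨B, hB⟩ := exists_bound (R := fun i y => f i = y) c fun i _ => ⟨f i, rfl⟩
  refine exists_internalCard B fun y hy => ?_
  obtain ⟨i, hi, rfl⟩ := hfS.surjOn (hTS hy)
  obtain ⟨_, hlt, rfl⟩ := hB i hi
  exact hlt

theorem le_add (hS : InternalCard S a) (hT : InternalCard T b) (hU : InternalCard U c)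
    (h : U ⊆ S ∪ T) : c ≤ a + b := by
  obtain ⟨f, hf, hfS⟩ := hS
  obtain ⟨g, hg, hgT⟩ := hT
  obtain ⟨k, hk, hkU⟩ := hU
  have hf' (α : Type) (t : (α → N) → N) [DefFun arith t] : DefFun arith fun v => f (t v) :=
    hf.defFun
  have hg' (α : Type) (t : (α → N) → N) [DefFun arith t] : DefFun arith fun v => g (t v) :=
    hg.defFun
  have hk' (α : Type) (t : (α → N) → N) [DefFun arith t] : DefFun arith fun v => k (t v) :=
    hk.defFun
  refine le_of_definable_injection
    (R := fun i z => (z < a ∧ f z = k i) ∨ ∃ u, z = a + u ∧ g u = k i) (fun i hi => ?_) ?_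
  · obtain hi | hi := h (hkU.mapsTo hi)
    · obtain ⟨z, hz, hzi⟩ := hfS.surjOn hi
      exact ⟨z, (show z < a from hz).trans_le le_self_add, .inl ⟨hz, hzi⟩⟩
    · obtain ⟨u, hu, hui⟩ := hgT.surjOn hi
      exact ⟨a + u, add_lt_add_right (show u < b from hu) a, .inr ⟨u, rfl, hui⟩⟩
  · rintro i hi j hj z (⟨hz, h⟩ | ⟨u, rfl, h⟩) (⟨hz', h'⟩ | ⟨u', hz', h'⟩)
    · exact hkU.injOn hi hj (h.symm.trans h')
    · exact absurd hz (not_lt.mpr (hz' ▸ le_self_add))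
    · exact absurd hz' (not_lt.mpr le_self_add)
    · obtain rfl := add_left_cancel hz'
      exact hkU.injOn hi hj (h.symm.trans h')

theorem le_sum {ι : Type*} (s : Finset ι) {A : ι → Set N} {t : ι → N}
    (hA : ∀ i, InternalCard (A i) (t i)) (hU : InternalCard U c) (h : U ⊆ ⋃ i ∈ s, A i) :
    c ≤ ∑ i ∈ s, t i := by
  classical
  induction s using Finset.induction_on generalizing U c with
  | empty =>
    obtain ⟨f, -, hf⟩ := hU
    rw [Finset.sum_empty]
    by_contra! hc
    simpa using h (hf.mapsTo hc)
  | insert j s hj ih =>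
    have := hU.defPred
    have := (hA j).defPred
    obtain ⟨c', hc'⟩ := hU.exists_of_subset (T := U \ A j) sdiff_subset
      (hT := inferInstanceAs (DefPred arith fun v => v 0 ∈ U ∧ ¬ v 0 ∈ A j))
    rw [Finset.sum_insert hj]
    calc c ≤ t j + c' := (hA j).le_add hc' hU (by simp)
      _ ≤ t j + ∑ i ∈ s, t i := by
        gcongr
        refine ih hc' ?_
        rwa [sdiff_subset_iff, ← Finset.set_biUnion_insert]

theorem mul_le (hS : InternalCard S c) {R : N → N → N → Prop}
    (hR : DefPred arith fun v : Fin 3 → N => R (v 0) (v 1) (v 2))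
    (htotal : ∀ s ∈ S, ∀ t < e, ∃ z < x, R s t z)
    (hinj : ∀ s ∈ S, ∀ s' ∈ S, ∀ t < e, ∀ t' < e, ∀ z, R s t z → R s' t' z → s = s' ∧ t = t') :
    c * e ≤ x := by
  obtain ⟨f, hf, hfS⟩ := hS
  have hdef : DefPred arith fun v : Fin 2 → N => R (f (v 0 / e)) (v 0 % e) (v 1) :=
    hR.subst (g := ![fun v => f (v 0 / e), fun v => v 0 % e, fun v => v 1])
      (by simpa [Fin.forall_fin_succ] using ⟨hf.defFun, inferInstance, inferInstance⟩)
  have hdiv {i : N} (hi : i < c * e) : i / e < c := div_lt_of_lt_mul hi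
  have hmod {i : N} (hi : i < c * e) : i % e < e :=
    mod_lt i (pos_of_mul_pos_right (zero_le.trans_lt hi) zero_le)
  refine le_of_definable_injection (R := fun i z => R (f (i / e)) (i % e) z)
    (fun i hi => htotal _ (hfS.mapsTo (hdiv hi)) _ (hmod hi)) fun i hi j hj z hiz hjz => ?_
  obtain ⟨hf_eq, hmod_eq⟩ := hinj _ (hfS.mapsTo (hdiv hi)) _ (hfS.mapsTo (hdiv hj)) _ (hmod hi) _
    (hmod hj) z hiz hjz
  rw [← div_mul_add_mod i e, ← div_mul_add_mod j e, hmod_eq,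
    hfS.injOn (hdiv hi) (hdiv hj) hf_eq]

end InternalCard

end InternalCardinality

section TupleCodes

section DiscreteSemiring

variable {R : Type*} [CommSemiring R] [LinearOrder R] [IsStrictOrderedRing R]
  [CanonicallyOrderedAdd R] [SuccAddOrder R] {d : R} {K : ℕ} {c c' : Fin K → R}

theorem sum_mul_pow_lt (hc : ∀ j, c j < d) : ∑ j, c j * d ^ (j : ℕ) < d ^ K := by
  induction K with
  | zero => simp
  | succ K ih =>
    rw [Fin.sum_univ_castSucc, add_comm, pow_succ', ← add_zero (d * d ^ K)]
    exact mul_add_lt_mul_add (ih fun j => hc j.castSucc) (hc (Fin.last K))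

theorem eq_of_sum_mul_pow_eq (hc : ∀ j, c j < d) (hc' : ∀ j, c' j < d)
    (h : ∑ j, c j * d ^ (j : ℕ) = ∑ j, c' j * d ^ (j : ℕ)) : c = c' := by
  induction K with
  | zero => exact Subsingleton.elim _ _
  | succ K ih =>
    rw [Fin.sum_univ_castSucc, Fin.sum_univ_castSucc, add_comm, add_comm (∑ i : Fin K, _)] at h
    obtain ⟨hlast, hinit⟩ := quotient_remainder_unique h (sum_mul_pow_lt fun j => hc j.castSucc)
      (sum_mul_pow_lt fun j => hc' j.castSucc)
    have := ih (fun j => hc j.castSucc) (fun j => hc' j.castSucc) hinit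
    exact funext fun j => Fin.lastCases hlast (congrFun this) j

end DiscreteSemiring

theorem binOfFin_surjective (n : ℕ) : Function.Surjective (binOfFin (n := n)) := by
  refine ((Fintype.bijective_iff_injective_and_card _).mpr ⟨fun i j h => ?_, by simp⟩).surjective
  refine Fin.ext (Nat.eq_of_testBit_eq fun k => ?_)
  obtain hk | hk := lt_or_ge k n
  · exact congrFun h ⟨k, hk⟩
  · have hpow : 2 ^ n ≤ 2 ^ k := Nat.pow_le_pow_right two_pos hk
    rw [Nat.testBit_lt_two_pow (i.2.trans_le hpow), Nat.testBit_lt_two_pow (j.2.trans_le hpow)]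

variable {N : Type*} [arith.Structure N] [PAModel N] {α : Type*} {d y : N} {n : ℕ}

theorem tupleCode_eq_sum (d : N) (b : (Fin n → Bool) → N) :
    tupleCode d b = ∑ j : Fin (2 ^ n), b (binOfFin j) * d ^ (j : ℕ) := by
  rw [Fin.sum_univ_def, List.sum, List.foldr_map]
  rfl

theorem tupleCode_lt {b : (Fin n → Bool) → N} (hb : ∀ τ, b τ < d) :
    tupleCode d b < d ^ 2 ^ n := by
  rw [tupleCode_eq_sum]
  exact sum_mul_pow_lt fun j => hb _

theorem eq_of_tupleCode_eq {b b' : (Fin n → Bool) → N} (hb : ∀ τ, b τ < d) (hb' : ∀ τ, b' τ < d)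
    (h : tupleCode d b = tupleCode d b') : b = b' := by
  rw [tupleCode_eq_sum, tupleCode_eq_sum] at h
  exact (binOfFin_surjective n).injective_comp_right
    (eq_of_sum_mul_pow_eq (fun j => hb _) (fun j => hb' _) h)

theorem DefFun.sum {ι : Type*} (s : Finset ι) {f : ι → (α → N) → N}
    (hf : ∀ i, DefFun arith (f i)) : DefFun arith fun v => ∑ i ∈ s, f i v := by
  classical
  induction s using Finset.induction_on with
  | empty => simpa only [Finset.sum_empty] using DefFun.const 0
  | insert i s hi ih =>
    simp only [Finset.sum_insert hi]
    infer_instance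

instance DefFun.tupleCode {b : (α → N) → (Fin n → Bool) → N}
    [hb : ∀ τ, DefFun arith fun v => b v τ] : DefFun arith fun v => tupleCode d (b v) := by
  simp only [tupleCode_eq_sum]
  exact DefFun.sum _ fun j => inferInstance

instance DefPred.digitB {f : (α → N) → N} [DefFun arith f] {i : ℕ} :
    DefPred arith fun v => digitB (f v) i :=
  DefPred.of_iff (Q := fun v => f v / 2 ^ i % 2 = 1) inferInstance fun _ => digitB_iff

/-- The tuple `b` with the remainder modulo `y` of its coordinate at `σ` replaced by `t`. -/
noncomputable def setMod {ι : Type*} [DecidableEq ι] (σ : ι) (y : N) (b : ι → N) (t : N) : ι → N :=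
  Function.update b σ (b σ / y * y + t)

section SetMod

variable {ι : Type*} [DecidableEq ι] {σ : ι}

instance DefFun.setMod {b : (α → N) → ι → N} {t : (α → N) → N} {τ : ι}
    [∀ τ, DefFun arith fun v => b v τ] [DefFun arith t] :
    DefFun arith fun v => setMod σ y (b v) (t v) τ := by
  obtain rfl | hτ := eq_or_ne τ σ
  · simp only [Arith.setMod, Function.update_self]
    infer_instance
  · simp only [Arith.setMod, Function.update_of_ne hτ]
    infer_instance

theorem setMod_lt {b : ι → N} {t : N} (hb : ∀ τ, b τ < d) (hy : y ∣ d) (ht : t < y) (τ : ι) :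
    setMod σ y b t τ < d := by
  obtain rfl | hτ := eq_or_ne τ σ
  · obtain ⟨e, rfl⟩ := exists_eq_mul_left_of_dvd hy
    simpa [setMod] using mul_add_lt_mul_add (r' := 0) ht (div_lt_of_lt_mul (hb τ))
  · simpa [setMod, hτ] using hb τ

theorem setMod_injective {g : (ι → N) → N} (hg : DependsOn g {σ}ᶜ) {b b' : ι → N} {t t' : N}
    (hb : b σ % y = g b) (hb' : b' σ % y = g b') (ht : t < y) (ht' : t' < y)
    (h : setMod σ y b t = setMod σ y b' t') : b = b' ∧ t = t' := by
  have hne (τ) (hτ : τ ≠ σ) : b τ = b' τ := by simpa [setMod, hτ] using congrFun h τ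
  obtain ⟨hdiv, rfl⟩ := quotient_remainder_unique
    (by simpa only [setMod, Function.update_self] using congrFun h σ) ht ht'
  have hmod : b σ % y = b' σ % y := by rw [hb, hb', hg hne]
  refine ⟨funext fun τ => ?_, rfl⟩
  obtain rfl | hτ := eq_or_ne τ σ
  · rw [← div_mul_add_mod (b τ) y, hdiv, hmod, div_mul_add_mod]
  · exact hne τ hτ

end SetMod

theorem InternalCard.mul_le_pow_of_mod_eq {B : Set ((Fin n → Bool) → N)} {c : N}
    (hc : InternalCard (tupleCode d '' B) c) (hB : ∀ b ∈ B, ∀ τ, b τ < d) (hy : y ∣ d)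
    {σ : Fin n → Bool} {g : ((Fin n → Bool) → N) → N} (hg : DependsOn g {σ}ᶜ)
    (hmod : ∀ b ∈ B, b σ % y = g b) : c * y ≤ d ^ 2 ^ n := by
  refine hc.mul_le (R := fun s t z => ∃ b : (Fin n → Bool) → N, (∀ τ, b τ < d) ∧
    s = tupleCode d b ∧ z = tupleCode d (setMod σ y b t)) inferInstance ?_ ?_
  · rintro _ ⟨b, hb, rfl⟩ t ht
    exact ⟨_, tupleCode_lt (setMod_lt (hB b hb) hy ht), b, hB b hb, rfl, rfl⟩
  · rintro _ ⟨b, hb, rfl⟩ _ ⟨b', hb', rfl⟩ t ht t' ht' z ⟨b₁, hb₁, h₁, rfl⟩ ⟨b₁', hb₁', h₁', hz⟩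
    obtain rfl := eq_of_tupleCode_eq (hB b hb) hb₁ h₁
    obtain rfl := eq_of_tupleCode_eq (hB b' hb') hb₁' h₁'
    obtain ⟨rfl, rfl⟩ := setMod_injective hg (hmod b hb) (hmod b' hb') ht ht'
      (eq_of_tupleCode_eq (setMod_lt hb₁ hy ht) (setMod_lt hb₁' hy ht') hz)
    exact ⟨rfl, rfl⟩

theorem natCast_le_of_not_isStd {a : N} (ha : ¬ IsStd a) (m : ℕ) : (m : N) ≤ a := by
  induction m with
  | zero => simp
  | succ m ih =>
    rw [Nat.cast_succ]
    exact Order.add_one_le_of_lt (ih.lt_of_ne fun h => ha ⟨m, h.symm⟩)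

theorem two_pow_dvd_of_isPow2 {a : N} (ha : ¬ IsStd a) (hd : IsPow2 a d) (m : ℕ) :
    2 ^ m ∣ d := by
  obtain ⟨f, -, -, hf, rfl⟩ := hd
  obtain ⟨e, rfl⟩ := exists_add_of_le (natCast_le_of_not_isStd ha m)
  have key (j : ℕ) (hj : j ≤ m) : f (j + e) = 2 ^ j * f e := by
    induction j with
    | zero => simp
    | succ j ih =>
      have hlt : (j : N) + e < m + e := add_lt_add_left (Nat.cast_lt.mpr hj) e
      calc f ((j + 1 : ℕ) + e) = f (j + e + 1) := by rw [Nat.cast_succ, add_right_comm]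
        _ = f (j + e) + f (j + e) := hf _ hlt
        _ = 2 ^ (j + 1) * f e := by rw [ih (Nat.le_of_succ_le hj)]; ring
  exact Dvd.intro _ (key m le_rfl).symm

end TupleCodes

section Counting

theorem exists_lt_mul_of_le_add_sum {R : Type*} [CommSemiring R] [LinearOrder R]
    [IsStrictOrderedRing R] {D c s : R} {v : ℕ} {t : ℕ → R} (hv : 0 < v) (hc : D < v * c)
    (hle : c ≤ s + ∑ i ∈ Finset.range (2 * v), t i) (hs : 2 * v * s ≤ D) :
    ∃ i, D < (2 * v) ^ 2 * t i := by
  have hsum : D < 2 * v * ∑ i ∈ Finset.range (2 * v), t i := by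
    refine lt_of_add_lt_add_left (a := D) ?_
    calc D + D < v * c + v * c := add_lt_add hc hc
      _ = 2 * v * c := by ring
      _ ≤ 2 * v * (s + ∑ i ∈ Finset.range (2 * v), t i) := by gcongr
      _ = 2 * v * s + 2 * v * ∑ i ∈ Finset.range (2 * v), t i := mul_add _ _ _
      _ ≤ D + 2 * v * ∑ i ∈ Finset.range (2 * v), t i := by gcongr
  obtain ⟨i, -, hi⟩ : ∃ i ∈ Finset.range (2 * v), D < (2 * v) ^ 2 * t i := by
    refine Finset.exists_lt_of_sum_lt ?_
    calc ∑ _ ∈ Finset.range (2 * v), D = 2 * v * D := by simp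
      _ < 2 * v * (2 * v * ∑ i ∈ Finset.range (2 * v), t i) := by gcongr
      _ = ∑ i ∈ Finset.range (2 * v), (2 * v) ^ 2 * t i := by rw [← Finset.mul_sum]; ring
  exact ⟨i, hi⟩

variable {N : Type*} [arith.Structure N] {d : N} {n : ℕ}

/-- The codes of the realizations of `fmls` that satisfy `Q`; this represents the internal subset
of `p(N)` cut out by `Q`. -/
def realizationCodesWhere (d : N) (fmls : Set (CFormula N n)) (Q : ((Fin n → Bool) → N) → Prop) :
    Set N :=
  {e | ∃ b : (Fin n → Bool) → N, RealizesAll fmls b ∧ Q b ∧ e = tupleCode d b}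

variable [PAModel N]

theorem DefPred.mem_realizationCodesWhere {fmls : Set (CFormula N n)} (hfmls : fmls.Finite)
    {Q : ((Fin n → Bool) → N) → Prop} (hQ : DefPred arith Q) :
    DefPred arith fun v : Fin 1 → N => v 0 ∈ realizationCodesWhere d fmls Q :=
  have := (DefPred.realizesAll hfmls).reindex (β := Fin 1 ⊕ (Fin n → Bool)) .inr
  have := hQ.reindex (β := Fin 1 ⊕ (Fin n → Bool)) .inr
  inferInstanceAs (DefPred arith fun v => ∃ b, RealizesAll fmls b ∧ Q b ∧ v 0 = tupleCode d b)

theorem Condition.exists_internalCard (p : Condition N d) {Q : ((Fin p.n → Bool) → N) → Prop}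
    (hQ : DefPred arith Q) : ∃ c, InternalCard (realizationCodesWhere d p.fmls Q) c := by
  have := DefPred.mem_realizationCodesWhere (d := d) p.finite hQ
  refine Arith.exists_internalCard (d ^ 2 ^ p.n) ?_
  rintro _ ⟨b, hb, -, rfl⟩
  exact tupleCode_lt (p.bounded b hb)

theorem Condition.two_pow_mul_card_agree_le {a c : N} (ha : ¬ IsStd a) (hd : IsPow2 a d)
    (p : Condition N d) {σ : Fin p.n → Bool} {G : ((Fin p.n → Bool) → N) → N}
    (hG : DependsOn G {σ}ᶜ) {m : ℕ} (hc : InternalCard (realizationCodesWhere d p.fmls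
      fun b => ∀ i < m, (digitB (b σ) i ↔ digitB (G b) i)) c) : 2 ^ m * c ≤ d ^ 2 ^ p.n := by
  have himage : realizationCodesWhere d p.fmls
      (fun b => ∀ i < m, (digitB (b σ) i ↔ digitB (G b) i)) = tupleCode d ''
        {b | RealizesAll p.fmls b ∧ ∀ i < m, (digitB (b σ) i ↔ digitB (G b) i)} := by
    ext e
    simp only [realizationCodesWhere, Set.mem_ofPred_eq, Set.mem_image, and_assoc, eq_comm]
  rw [himage] at hc
  rw [mul_comm]
  exact hc.mul_le_pow_of_mod_eq (fun b hb => p.bounded b hb.1) (two_pow_dvd_of_isPow2 ha hd m)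
    (g := fun b => G b % 2 ^ m) (fun b b' h => congrArg (· % 2 ^ m) (hG h))
    fun b hb => mod_two_pow_eq_of_digitB_iff hb.2

theorem Condition.exists_large_failure (p : Condition N d)
    {Q : ℕ → ((Fin p.n → Bool) → N) → Prop} (hQ : ∀ i, DefPred arith (Q i))
    (hsmall : ∀ m c, InternalCard (realizationCodesWhere d p.fmls fun b => ∀ i < m, Q i b) c →
      2 ^ m * c ≤ d ^ 2 ^ p.n) :
    ∃ (i v : ℕ) (c : N), 0 < v ∧
      InternalCard (realizationCodesWhere d p.fmls fun b => ¬ Q i b) c ∧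
      d ^ 2 ^ p.n < v * c := by
  obtain ⟨u, v, c, hu, hv, hc, hlarge⟩ := p.large
  replace hlarge : d ^ 2 ^ p.n < v * c :=
    (le_mul_of_one_le_left zero_le (Nat.one_le_cast.mpr hu)).trans_lt hlarge
  have hdef : DefPred arith fun b => ∀ i < 2 * v, Q i b :=
    (DefPred.forall_finite (P := fun i : Fin (2 * v) => Q i)).of_iff fun b =>
      (Fin.forall_iff (p := fun i => Q i b)).symm
  obtain ⟨s, hs⟩ := p.exists_internalCard hdef
  obtain ⟨r, hr⟩ := p.exists_internalCard hdef.not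
  choose t ht using fun i => p.exists_internalCard (hQ i).not
  have hr_le : r ≤ ∑ i ∈ Finset.range (2 * v), t i := by
    refine InternalCard.le_sum _ ht hr ?_
    rintro e ⟨b, hb, hfail, rfl⟩
    push Not at hfail
    obtain ⟨i, hi, hib⟩ := hfail
    exact Set.mem_biUnion (Finset.mem_coe.mpr (Finset.mem_range.mpr hi)) ⟨b, hb, hib, rfl⟩
  have hc_le : c ≤ s + r := by
    refine hs.le_add hr hc ?_
    rintro e ⟨b, hb, rfl⟩
    exact (em (∀ i < 2 * v, Q i b)).imp (⟨b, hb, ·, rfl⟩) (⟨b, hb, ·, rfl⟩)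
  have hs_le : 2 * v * s ≤ d ^ 2 ^ p.n := by
    refine le_trans ?_ (hsmall (2 * v) s hs)
    gcongr
    exact_mod_cast (2 * v).lt_two_pow_self.le
  obtain ⟨i, hi⟩ := exists_lt_mul_of_le_add_sum hv hlarge (hc_le.trans (by gcongr)) hs_le
  exact ⟨i, (2 * v) ^ 2, t i, by positivity, ht i, by exact_mod_cast hi⟩

end Counting

end Arith

open Arith in
/-- The counting lemma.  Let `p` be a condition with `n = n_p`, `F : N^k → N` definable
in `N`, and `(σ, σ₁, …, σ_k)` a tuple from `2^n` with `σ ∉ {σ₁, …, σ_k}`.  Then for each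
`m ∈ ω`, internally in `N`, the set of realizations of `p` on which the first `m` binary
digits of `b_σ` agree with those of `F(b_{σ₁}, …, b_{σ_k})` has cardinality at most
`2^{-m}·(2^a)^{2^n}`; consequently there are `i ∈ ω` and a positive rational `ε = u/v`
such that the set of realizations with `(b_σ)_i ≠ (F(b_{σ₁}, …, b_{σ_k}))_i` has
internal cardinality greater than `ε·(2^a)^{2^n}`. -/
theorem statement_17 (N : Type*) [arith.Structure N] (hN : NonstandardModel N)
    (a d : N) (ha : ¬ IsStd a) (hd : IsPow2 a d)
    (p : Condition N d) (k : ℕ) (F : (Fin k → N) → N) (hF : DefinableFun F)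
    (σ : Fin p.n → Bool) (σs : Fin k → Fin p.n → Bool) (hσ : ∀ j, σ ≠ σs j) :
    (∀ m : ℕ, ∀ c : N,
      InternalCard {e : N | ∃ b : (Fin p.n → Bool) → N, RealizesAll p.fmls b ∧
          (∀ i < m, (digitB (b σ) i ↔ digitB (F fun j => b (σs j)) i)) ∧
          e = tupleCode d b} c →
        leM (mulM (numeral N (2 ^ m)) c) (powStd d (2 ^ p.n))) ∧
    (∃ (i u v : ℕ) (c : N), 0 < u ∧ 0 < v ∧
      InternalCard {e : N | ∃ b : (Fin p.n → Bool) → N, RealizesAll p.fmls b ∧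
          ¬ (digitB (b σ) i ↔ digitB (F fun j => b (σs j)) i) ∧
          e = tupleCode d b} c ∧
      ltM (mulM (numeral N u) (powStd d (2 ^ p.n))) (mulM (numeral N v) c)) := by
  have : PAModel N := ⟨hN.1⟩
  have hdep : DependsOn (fun b : (Fin p.n → Bool) → N => F fun j => b (σs j)) {σ}ᶜ :=
    fun b b' h => congrArg F (funext fun j => h _ (hσ j).symm)
  have hFσs : DefFun arith fun b : (Fin p.n → Bool) → N => F fun j => b (σs j) :=
    hF.defFun.reindex σs
  have hagree (m : ℕ) (c : N) (hc : InternalCard (realizationCodesWhere d p.fmls fun b =>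
      ∀ i < m, (digitB (b σ) i ↔ digitB (F fun j => b (σs j)) i)) c) :
      2 ^ m * c ≤ d ^ 2 ^ p.n :=
    p.two_pow_mul_card_agree_le ha hd hdep hc
  refine ⟨fun m c hc => ?_, ?_⟩
  · change ((2 ^ m : ℕ) : N) * c ≤ d ^ 2 ^ p.n
    exact_mod_cast hagree m c hc
  · obtain ⟨i, v, c, hv, hc, hlt⟩ := p.exists_large_failure (fun i => inferInstance) hagree
    refine ⟨i, 1, v, c, one_pos, hv, hc, ?_⟩
    change ((1 : ℕ) : N) * d ^ 2 ^ p.n < v * c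
    simpa using hlt
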